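/- arXiv:1706.01573 — 2 statements merged into one kernel-verified Lean document; each statement's English description precedes it below -/
import Mathlib

section
/- Let y : ℕ → ℝ be a finitely supported sequence. Then ∑_{k=n}^∞ \binom{k}{n}(-1)^k y_k = -y_n holds for every n if and only if there exists a finitely supported sequence b : ℕ → ℝ such that y_n = ∑_{j} b_j \left( \binom{j+1}{n-j} + \binom{j}{n-j-1} \right) for every n (the inner sum is finite). In other words, the finitely supported inverse invariant sequences of the second kind are exactly the finite linear combinations of the columns of Q^{T↓}(0|0), whose j-th column has entries \binom{j+1}{n-j} + \binom{j}{n-j-1}. -/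
open Polynomial in
theorem aux_exists (f : ℕ → ℝ) (hf : (Function.support f).Finite) :
    ∃ P : ℝ[X], ∀ n, P.coeff n = f n := by
  refine ⟨∑ i ∈ hf.toFinset, monomial i (f i), fun n => ?_⟩
  simp only [finsetSum_coeff, coeff_monomial]
  rw [Finset.sum_ite_eq' hf.toFinset n f]
  by_cases h : f n = 0 <;> simp [h]

open Polynomial in
theorem aux_comp (Y : ℝ[X]) (n : ℕ) :
    (Y.comp (-1 - X)).coeff n = ∑ᶠ k, (Nat.choose k n : ℝ) * (-1) ^ k * Y.coeff k := by
  rw [finsum_eq_sum_of_support_subset (s := Y.support)]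
  · rw [comp, eval₂_eq_sum, Polynomial.sum, finsetSum_coeff]
    refine Finset.sum_congr rfl fun k _ => ?_
    have : (-1 - X : ℝ[X]) ^ k = C ((-1) ^ k) * (X + 1) ^ k := by
      rw [C_pow, ← mul_pow]
      congr 1
      simp
      ring
    rw [this, coeff_C_mul, coeff_C_mul, coeff_X_add_one_pow]
    ring
  · intro k hk
    simp only [Function.mem_support] at hk
    simp only [Finset.mem_coe, mem_support_iff]
    exact right_ne_zero_of_mul hk

open Polynomial in
theorem aux_coeff (B : ℝ[X]) (n : ℕ) :
    ((1 + 2 * X) * B.comp (X * (X + 1))).coeff n = ∑ j ∈ Finset.range (n + 1),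
        B.coeff j * ((Nat.choose (j + 1) (n - j) : ℝ) +
          (if j + 1 ≤ n then (Nat.choose j (n - j - 1) : ℝ) else 0)) := by
  induction B using Polynomial.induction_on' with
  | add p q hp hq =>
    rw [add_comp, mul_add, coeff_add, hp, hq, ← Finset.sum_add_distrib]
    refine Finset.sum_congr rfl fun j _ => ?_
    rw [coeff_add, add_mul]
  | monomial m a =>
    have h : (1 + 2 * X) * ((monomial m a).comp (X * (X + 1)) : ℝ[X]) =
        C a * (X ^ m * (X + 1) ^ (m + 1) + X ^ (m + 1) * (X + 1) ^ m) := by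
      rw [monomial_comp, mul_pow]; ring
    rw [h, coeff_C_mul, coeff_add, coeff_X_pow_mul', coeff_X_pow_mul', coeff_X_add_one_pow,
      coeff_X_add_one_pow]
    simp only [coeff_monomial, ite_mul, zero_mul]
    rw [Finset.sum_ite_eq]
    by_cases hm : m ≤ n
    · simp [hm, Nat.lt_succ_iff, Nat.sub_sub]
    · have : ¬ m + 1 ≤ n := by omega
      simp [hm, this, Nat.lt_succ_iff]

open Polynomial in
theorem aux_T : ((X * (X + 1) : ℝ[X])).comp (-1 - X) = X * (X + 1) := by
  simp; ring

open Polynomial in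
theorem aux_main (d : ℕ) : ∀ Y : ℝ[X], Y.natDegree ≤ d → Y.comp (-1 - X) = -Y →
    ∃ B : ℝ[X], Y = (1 + 2 * X) * B.comp (X * (X + 1)) := by
  induction d using Nat.strong_induction_on with
  | _ d ih =>
  intro Y hd hY
  have h1 : Y.eval (-1) = - Y.eval 0 := by
    have := congrArg (eval 0) hY
    simpa [eval_comp] using this
  set Z : ℝ[X] := Y - C (Y.eval 0) * (1 + 2 * X) with hZ
  have z0 : Z.eval 0 = 0 := by simp [hZ]
  have z1 : Z.eval (-1) = 0 := by simp [hZ, h1]; ring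
  obtain ⟨R, hR⟩ : X ∣ Z := by
    have := dvd_iff_isRoot.mpr z0
    simpa using this
  have r1 : R.eval (-1) = 0 := by
    rw [hR] at z1; simpa using z1
  obtain ⟨Q, hQ⟩ : (X + 1) ∣ R := by
    have := dvd_iff_isRoot.mpr r1
    simpa using this
  have hZQ : Z = (X * (X + 1)) * Q := by rw [hR, hQ]; ring
  have hZc : Z.comp (-1 - X) = -Z := by
    rw [hZ]
    simp [hY]
    ring
  have hmon : (X * (X + 1) : ℝ[X]).Monic := monic_X.mul (monic_X_add_C 1)
  have hQc : Q.comp (-1 - X) = -Q := by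
    rw [hZQ, mul_comp, aux_T, ← mul_neg] at hZc
    exact mul_left_cancel₀ hmon.ne_zero hZc
  have hYe : Y = C (Y.eval 0) * (1 + 2 * X) + (X * (X + 1)) * Q := by
    rw [← hZQ, hZ]; ring
  by_cases hQ0 : Q = 0
  · refine ⟨C (Y.eval 0), ?_⟩
    rw [C_comp]
    conv_lhs => rw [hYe, hQ0]
    ring
  · have hdeg : Z.natDegree = 2 + Q.natDegree := by
      rw [hZQ, hmon.natDegree_mul' hQ0, monic_X.natDegree_mul (monic_X_add_C 1 : (X + C (1:ℝ)).Monic)]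
      have h11 : (X + 1 : ℝ[X]).natDegree = 1 := natDegree_X_add_C 1
      rw [natDegree_X, h11]
    have hl : (C (Y.eval 0) * (1 + 2 * X) : ℝ[X]).natDegree ≤ 1 := by compute_degree
    have hle : Z.natDegree ≤ max Y.natDegree 1 :=
      (natDegree_sub_le _ _).trans (max_le_max le_rfl hl)
    have hlt : Q.natDegree < d := by
      rcases le_max_iff.mp hle with h | h <;> omega
    obtain ⟨B, hB⟩ := ih _ hlt Q le_rfl hQc
    refine ⟨C (Y.eval 0) + X * B, ?_⟩
    conv_lhs => rw [hYe, hB]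
    simp only [add_comp, C_comp, mul_comp, X_comp]
    ring

/-- the finitely supported inverse invariant sequences of the second
kind are exactly the finite linear combinations of the columns of `Q^{T↓}(0|0)`,
whose `j`-th column has entries `choose (j+1) (n-j) + choose j (n-j-1)`
(the second binomial being `0` when `n - j - 1 < 0`, i.e. when `j + 1 > n`). -/
theorem stmt7 (y : ℕ → ℝ) (hy : (Function.support y).Finite) :
    (∀ n, ∑ᶠ k, (Nat.choose k n : ℝ) * (-1) ^ k * y k = -y n) ↔
    (∃ b : ℕ → ℝ, (Function.support b).Finite ∧
      ∀ n, y n = ∑ j ∈ Finset.range (n + 1),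
        b j * ((Nat.choose (j + 1) (n - j) : ℝ) +
          (if j + 1 ≤ n then (Nat.choose j (n - j - 1) : ℝ) else 0))) := by
  obtain ⟨Y, hYy⟩ := aux_exists y hy
  have e1 : (∀ n, ∑ᶠ k, (Nat.choose k n : ℝ) * (-1) ^ k * y k = -y n) ↔
      Y.comp (-1 - Polynomial.X) = -Y := by
    rw [Polynomial.ext_iff]
    simp only [aux_comp, Polynomial.coeff_neg, hYy]
  rw [e1]
  constructor
  · intro h
    obtain ⟨B, hB⟩ := aux_main _ Y le_rfl h
    refine ⟨B.coeff, ?_, fun n => ?_⟩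
    · refine B.support.finite_toSet.subset fun k hk => ?_
      simpa using hk
    · rw [← aux_coeff, ← hB, hYy]
  · rintro ⟨b, hb, h⟩
    obtain ⟨B, hBb⟩ := aux_exists b hb
    have : Y = (1 + 2 * Polynomial.X) * B.comp (Polynomial.X * (Polynomial.X + 1)) := by
      ext n
      rw [aux_coeff, hYy, h]
      simp only [hBb]
    rw [this, Polynomial.mul_comp, Polynomial.comp_assoc, aux_T, ← neg_mul]
    congr 1
    simp
    ring
end

section
/- Let x : ℕ → ℝ. Define Q : ℕ × ℕ → ℝ by Q_{00} = 2, Q_{i0} = 1 for i ≥ 1, Q_{0j} = 0 for j ≥ 1, and Q_{ij} = \binom{i}{j} + \binom{i-1}{j-1} for i, j ≥ 1. Then ∑_{k=0}^{n} \binom{n}{k}(-1)^k x_k = x_n holds for every n if and only if there exists a sequence c : ℕ → ℝ such that for every n, x_n = ∑_{j=0}^{⌊n/2⌋} c_j Q_{n-j, j} (a finite sum). In other words, the invariant sequences of the first kind are exactly the (entrywise well-defined) linear combinations of the columns of Q↓, whose j-th column has entries Q_{n-j,j}. -/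
/-- The matrix `Q = P + [1, 0ᵀ; 0, P]`. -/
noncomputable def Qmat (i j : ℕ) : ℝ :=
  if j = 0 then (if i = 0 then 2 else 1)
  else if i = 0 then 0
  else (Nat.choose i j : ℝ) + (Nat.choose (i - 1) (j - 1) : ℝ)

noncomputable def TT (y : ℕ → ℝ) (n : ℕ) : ℝ :=
  ∑ k ∈ Finset.range (n + 1), (Nat.choose n k : ℝ) * (-1) ^ k * y k

lemma TT_succ (y : ℕ → ℝ) (n : ℕ) :
    TT y (n + 1) = TT y n - TT (fun k => y (k + 1)) n := by
  unfold TT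
  rw [Finset.sum_range_succ']
  have h1 : ∑ k ∈ Finset.range (n + 1), (Nat.choose n k : ℝ) * (-1) ^ k * y k
      = ∑ k ∈ Finset.range (n + 1), (Nat.choose n (k+1) : ℝ) * (-1) ^ (k+1) * y (k+1)
        + (Nat.choose n 0 : ℝ) * (-1) ^ 0 * y 0 := by
    rw [← Finset.sum_range_succ' (fun k => (Nat.choose n k : ℝ) * (-1) ^ k * y k),
      Finset.sum_range_succ _ (n+1)]
    simp
  rw [h1]
  have h2 : ∑ k ∈ Finset.range (n + 1), (Nat.choose (n+1) (k+1) : ℝ) * (-1) ^ (k+1) * y (k+1)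
      = ∑ k ∈ Finset.range (n + 1), (Nat.choose n (k+1) : ℝ) * (-1) ^ (k+1) * y (k+1)
       - ∑ k ∈ Finset.range (n + 1), (Nat.choose n k : ℝ) * (-1) ^ k * y (k+1) := by
    rw [← Finset.sum_sub_distrib]
    refine Finset.sum_congr rfl fun k _ => ?_
    rw [Nat.choose_succ_succ]
    push_cast
    ring
  rw [h2]
  simp
  ring

lemma TT_sub (y z : ℕ → ℝ) (n : ℕ) : TT (fun k => y k - z k) n = TT y n - TT z n := by
  unfold TT
  rw [← Finset.sum_sub_distrib]
  exact Finset.sum_congr rfl fun k _ => by ring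

lemma TT_step (x y : ℕ → ℝ) (h0 : y 0 = 0) (h1 : y 1 = 0)
    (h : ∀ n, y (n + 2) = y (n + 1) + x n) (hx : ∀ n, TT x n = x n) (n : ℕ) :
    TT y n = y n := by
  have hxy : x = fun k => y (k + 2) - y (k + 1) := by
    funext k; rw [h]; ring
  have key : ∀ n, TT y (n + 2) = TT y (n + 1) + x n := by
    intro n
    have a := TT_succ y n
    have b := TT_succ y (n + 1)
    have c := TT_succ (fun k => y (k + 1)) n
    have d := hx n
    have e : TT x n = TT (fun k => y (k + 2)) n - TT (fun k => y (k + 1)) n := by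
      rw [← TT_sub, hxy]
    simp only [add_assoc] at c b
    norm_num at c b
    linarith
  have : TT y n = y n ∧ TT y (n + 1) = y (n + 1) := by
    induction n with
    | zero => simp [TT, Finset.sum_range_succ, h0, h1]
    | succ n ih => exact ⟨ih.2, by rw [key, h, ih.2]⟩
  exact this.1

lemma Q_zero (n j : ℕ) (hj : n < 2 * j) : Qmat (n - j) j = 0 := by
  unfold Qmat
  rw [if_neg (by omega)]
  split_ifs with h
  · rfl
  · rw [Nat.choose_eq_zero_of_lt (by omega), Nat.choose_eq_zero_of_lt (by omega)]
    simp

lemma Q_rec (m j : ℕ) : Qmat (m + 1) (j + 1) = Qmat m (j + 1) + Qmat m j := by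
  rcases m with _ | m <;> rcases j with _ | j
  · norm_num [Qmat]
  · simp [Qmat, Nat.choose_eq_zero_of_lt]
  · simp [Qmat]
  · simp [Qmat, Nat.choose_succ_succ]
    ring

lemma Q_inv (j : ℕ) : ∀ n, TT (fun n => Qmat (n - j) j) n = Qmat (n - j) j := by
  induction j with
  | zero =>
    intro n
    have : ∀ n, TT (fun _ => (1:ℝ)) n = if n = 0 then 1 else 0 := by
      intro n
      cases n with
      | zero => simp [TT]
      | succ n => rw [TT_succ]; simp
    have h2 : TT (fun n => Qmat (n - 0) 0) n = TT (fun _ => (1:ℝ)) n + 1 := by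
      unfold TT
      rw [Finset.sum_range_succ', Finset.sum_range_succ']
      simp [Qmat]
      ring
    rw [h2, this]
    by_cases h : n = 0 <;> simp [Qmat, h]
    norm_num
  | succ j ih =>
    intro n
    refine TT_step (fun n => Qmat (n - j) j) (fun n => Qmat (n - (j+1)) (j+1)) ?_ ?_ ?_ ih n
    · exact Q_zero _ _ (by omega)
    · exact Q_zero _ _ (by omega)
    · intro n
      by_cases h : j ≤ n
      · obtain ⟨m, rfl⟩ := Nat.exists_eq_add_of_le h
        have a : j + m + 2 - (j + 1) = m + 1 := by omega
        have b : j + m + 1 - (j + 1) = m := by omega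
        have c : j + m - j = m := by omega
        simp only [a, b, c]
        exact Q_rec m j
      · rw [Q_zero _ _ (by omega), Q_zero _ _ (by omega), Q_zero _ _ (by omega)]
        simp

lemma ext_sum (c : ℕ → ℝ) (n N : ℕ) (h : n ≤ N) :
    ∑ j ∈ Finset.range (n / 2 + 1), c j * Qmat (n - j) j
      = ∑ j ∈ Finset.range (N + 1), c j * Qmat (n - j) j := by
  apply Finset.sum_subset
  · intro j; simp only [Finset.mem_range]; omega
  · intro j _ hj
    simp only [Finset.mem_range] at hj
    rw [Q_zero _ _ (by omega), mul_zero]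

lemma comb_inv (c : ℕ → ℝ) (n : ℕ) :
    TT (fun n => ∑ j ∈ Finset.range (n / 2 + 1), c j * Qmat (n - j) j) n
      = ∑ j ∈ Finset.range (n / 2 + 1), c j * Qmat (n - j) j := by
  rw [ext_sum c n n le_rfl]
  have : TT (fun n => ∑ j ∈ Finset.range (n / 2 + 1), c j * Qmat (n - j) j) n
      = ∑ j ∈ Finset.range (n + 1), c j * TT (fun n => Qmat (n - j) j) n := by
    unfold TT
    simp only [Finset.mul_sum]
    rw [Finset.sum_comm]
    refine Finset.sum_congr rfl fun k hk => ?_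
    rw [← Finset.mul_sum, ext_sum c k n (by simp at hk; omega), Finset.mul_sum]
    exact Finset.sum_congr rfl fun j _ => by ring
  rw [this]
  exact Finset.sum_congr rfl fun j _ => by rw [Q_inv]

noncomputable def cc (x : ℕ → ℝ) (m : ℕ) : ℝ :=
  (x (2 * m) - ∑ j : Fin m, cc x j.1 * Qmat (2 * m - j.1) j.1) / 2
termination_by m
decreasing_by exact j.2

lemma Q_diag (m : ℕ) : Qmat (2 * m - m) m = 2 := by
  have : 2 * m - m = m := by omega
  rw [this]
  unfold Qmat
  split_ifs <;> norm_num

lemma cc_spec (x : ℕ → ℝ) (m : ℕ) :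
    ∑ j ∈ Finset.range (2 * m / 2 + 1), cc x j * Qmat (2 * m - j) j = x (2 * m) := by
  have : 2 * m / 2 = m := by omega
  rw [this, Finset.sum_range_succ, Q_diag]
  conv_lhs => rw [cc.eq_1 x m]
  rw [Fin.sum_univ_eq_sum_range (fun j => cc x j * Qmat (2 * m - j) j) m]
  ring

lemma even_zero (z : ℕ → ℝ) (hz : ∀ n, TT z n = z n) (he : ∀ m, z (2 * m) = 0) (n : ℕ) :
    z n = 0 := by
  induction n using Nat.strong_induction_on with
  | _ n ih =>
    rcases Nat.even_or_odd n with h | h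
    · obtain ⟨m, rfl⟩ := h
      rw [← two_mul]; exact he m
    · have a := hz n
      unfold TT at a
      rw [Finset.sum_range_succ, Finset.sum_eq_zero, h.neg_one_pow] at a
      · simp at a; linarith
      · intro k hk
        rw [ih k (by simpa using hk), mul_zero]

/-- the invariant sequences of the first kind are exactly the linear
combinations of the columns of `Q↓`, whose `j`-th column has entries `Q (n-j) j`;
the sum runs over `0 ≤ j ≤ ⌊n/2⌋`. -/
theorem stmt9 (x : ℕ → ℝ) :
    (∀ n, ∑ k ∈ Finset.range (n + 1), (Nat.choose n k : ℝ) * (-1) ^ k * x k = x n) ↔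
    (∃ c : ℕ → ℝ, ∀ n, x n =
      ∑ j ∈ Finset.range (n / 2 + 1), c j * Qmat (n - j) j) := by
  constructor
  · intro hx
    refine ⟨cc x, fun n => ?_⟩
    have := even_zero
      (fun n => x n - ∑ j ∈ Finset.range (n / 2 + 1), cc x j * Qmat (n - j) j) ?_ ?_ n
    · exact sub_eq_zero.mp this
    · intro n
      rw [TT_sub, comb_inv]
      congr 1
      exact hx n
    · intro m
      simp only [cc_spec, sub_self]
  · rintro ⟨c, hc⟩ n
    have h : x = fun n => ∑ j ∈ Finset.range (n / 2 + 1), c j * Qmat (n - j) j := funext hc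
    have := comb_inv c n
    rw [← h, ← hc] at this
    exact this
end
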